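/- arXiv:1804.11345 — 5 statements merged into one kernel-verified Lean document; each statement's English description precedes it below -/
import Mathlib

section
/- Let n and t be positive integers with 2 ≤ t ≤ n−1. A linear map φ from S_n^+ to S_n^+ (i.e., φ(X+Y)=φ(X)+φ(Y) and φ(cX)=cφ(X) for all X,Y ∈ S_n^+ and all scalars c ≥ 0) satisfies φ(J_n − I_n) = J_n − I_n and the condition that for all X ∈ S_n^+, α(φ(X)) = t if and only if α(X) = t, if and only if there is an n×n permutation matrix P such that φ(X) = PᵀXP for all X ∈ S_n^+. -/
open Matrix

/-- `S_n^+`: the set of `n × n` real nonnegative symmetric matrices with zero trace. -/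
def SPlus (n : ℕ) : Set (Matrix (Fin n) (Fin n) ℝ) :=
  {X | (∀ i j, 0 ≤ X i j) ∧ X.IsSymm ∧ X.trace = 0}

/-- The independence number of a square matrix: the maximum order of a principal
zero submatrix, i.e. the maximum cardinality of a set `S` of indices with
`X i j = 0` for all `i, j ∈ S`. -/
noncomputable def matIndepNum {n : ℕ} (X : Matrix (Fin n) (Fin n) ℝ) : ℕ :=
  sSup {k | ∃ S : Finset (Fin n), (∀ i ∈ S, ∀ j ∈ S, X i j = 0) ∧ S.card = k}

/-- The all-ones matrix `J_n`. -/
def allOnes (n : ℕ) : Matrix (Fin n) (Fin n) ℝ := Matrix.of fun _ _ => (1 : ℝ)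


abbrev KSub (n k : ℕ) := {S : Finset (Fin n) // S.card = k}

theorem count_le {n k : ℕ} {e f : Finset (Fin n)} (h : e.card = f.card) :
    (Finset.univ.filter fun S : KSub n k => e ⊆ S.1).card ≤
    (Finset.univ.filter fun S : KSub n k => f ⊆ S.1).card := by
  classical
  obtain ⟨g, hg⟩ : ∃ g : Equiv.Perm (Fin n), e.map g.toEmbedding = f := by
    let g0 : e ≃ f := Finset.equivOfCardEq h
    refine ⟨g0.extendSubtype, ?_⟩
    apply Finset.eq_of_subset_of_card_le
    · intro x hx
      simp only [Finset.mem_map, Equiv.coe_toEmbedding] at hx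
      obtain ⟨a, ha, rfl⟩ := hx
      exact g0.extendSubtype_mem a ha
    · simp [h]
  refine Finset.card_le_card_of_injOn
    (fun S => ⟨S.1.map g.toEmbedding, by simp [S.2]⟩) ?_ ?_
  · intro S hS
    simp only [Finset.coe_filter, Finset.mem_univ, true_and, Set.mem_ofPred_eq] at hS ⊢
    rw [← hg]
    exact Finset.map_subset_map.2 hS
  · intro S _ T _ hST
    have := congrArg Subtype.val hST
    exact Subtype.ext (Finset.map_injective _ this)

theorem iff_of_inj {n k : ℕ} (π : KSub n k → KSub n k) (hπ : Function.Injective π)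
    {e f : Finset (Fin n)} (h : e.card = f.card)
    (hs : ∀ S, f ⊆ (π S).1 → e ⊆ S.1) (S) : f ⊆ (π S).1 ↔ e ⊆ S.1 := by
  classical
  refine ⟨hs S, ?_⟩
  have hb : Function.Bijective π := Finite.injective_iff_bijective.1 hπ
  let E := Equiv.ofBijective π hb
  have h1 : (Finset.univ.filter fun S : KSub n k => f ⊆ (π S).1) =
     (Finset.univ.filter fun S : KSub n k => e ⊆ S.1) := by
    apply Finset.eq_of_subset_of_card_le
    · intro S; simpa using hs S
    · refine (count_le h).trans ?_
      apply Finset.card_le_card_of_injOn E.symm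
      · intro S hS
        simp only [Finset.coe_filter, Finset.mem_univ, true_and, Set.mem_ofPred_eq] at hS ⊢
        have : π (E.symm S) = S := E.apply_symm_apply S
        rwa [this]
      · exact E.symm.injective.injOn
  intro h2
  have : S ∈ (Finset.univ.filter fun S : KSub n k => e ⊆ S.1) := by simpa using h2
  rw [← h1] at this
  simpa using this

theorem eq_of_sub {n t : ℕ} (ht : 2 ≤ t) (htn : t ≤ n - 1) {e f : Finset (Fin n)}
    (he : e.card = 2) (hf : f.card = 2)
    (h : ∀ S : KSub n t, e ⊆ S.1 → f ⊆ S.1) : e = f := by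
  classical
  symm
  apply Finset.eq_of_subset_of_card_le _ (by omega)
  intro x hx
  by_contra hxe
  obtain ⟨S, hS1, hS2, hS3⟩ := Finset.exists_subsuperset_card_eq (s := e)
    (t := Finset.univ.erase x) (n := t)
    (by intro y hy; simp; rintro rfl; exact hxe hy) (by omega) (by simp; omega)
  have := hS2 (h ⟨S, hS3⟩ hS1 hx)
  simp at this

def QProp {n : ℕ} (ρ : KSub n 2 ≃ KSub n 2) (k : ℕ) : Prop :=
  ∀ S : KSub n k, ∃ S' : KSub n k, ∀ e, (ρ e).1 ⊆ S'.1 ↔ e.1 ⊆ S.1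

theorem choose_two_inj {m k : ℕ} (hk : 2 ≤ k) (h : m.choose 2 = k.choose 2) : m = k := by
  rcases lt_trichotomy m k with h1 | h1 | h1
  · have : m.choose 2 < k.choose 2 := by
      have h3 : (m+1).choose 2 ≤ k.choose 2 := Nat.choose_le_choose 2 h1
      rcases Nat.eq_zero_or_pos m with h0 | h0
      · subst h0
        have := Nat.choose_pos hk
        simpa using this
      · have : (m+1).choose 2 = m.choose 1 + m.choose 2 := Nat.choose_succ_succ' m 1
        simp at this; omega
    omega
  · exact h1
  · have h3 : (k+1).choose 2 ≤ m.choose 2 := Nat.choose_le_choose 2 h1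
    have : (k+1).choose 2 = k.choose 1 + k.choose 2 := Nat.choose_succ_succ' k 1
    simp at this; omega

theorem edge_count {n : ℕ} (T : Finset (Fin n)) :
    (Finset.univ.filter fun e : KSub n 2 => e.1 ⊆ T).card = T.card.choose 2 := by
  classical
  rw [← Finset.card_powersetCard]
  rw [← Finset.card_map (Function.Embedding.subtype _)]
  congr 1
  ext s
  simp [Finset.mem_powersetCard, and_comm]

theorem descend {n k : ℕ} (ρ : KSub n 2 ≃ KSub n 2) (hk : 2 ≤ k) (hkn : k + 1 < n)
    (h : QProp ρ (k+1)) : QProp ρ k := by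
  classical
  intro S
  have hc : 1 < (S.1ᶜ).card := by rw [Finset.card_compl, S.2]; simp; omega
  obtain ⟨x, hx, y, hy, hxy⟩ := Finset.one_lt_card.1 hc
  simp only [Finset.mem_compl] at hx hy
  obtain ⟨A, hA⟩ := h ⟨insert x S.1, by rw [Finset.card_insert_of_notMem hx, S.2]⟩
  obtain ⟨B, hB⟩ := h ⟨insert y S.1, by rw [Finset.card_insert_of_notMem hy, S.2]⟩
  have key : ∀ e : KSub n 2, (ρ e).1 ⊆ A.1 ∩ B.1 ↔ e.1 ⊆ S.1 := by
    intro e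
    rw [Finset.subset_inter_iff, hA, hB, ← Finset.subset_inter_iff]
    have : insert x S.1 ∩ insert y S.1 = S.1 := by
      ext z; simp only [Finset.mem_inter, Finset.mem_insert]
      constructor
      · rintro ⟨rfl | h1, h2 | h2⟩ <;> first | assumption | exact absurd h2 hxy
      · tauto
    simp only [this]
  refine ⟨⟨A.1 ∩ B.1, ?_⟩, key⟩
  apply choose_two_inj hk
  have hS := edge_count S.1
  rw [S.2] at hS
  rw [← edge_count, ← hS]
  symm
  apply Finset.card_bij (fun e _ => ρ e)
  · intro e he; simpa [key] using he
  · intro a _ b _ hab; exact ρ.injective hab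
  · intro b hb
    refine ⟨ρ.symm b, ?_, by simp⟩
    simp only [Finset.mem_filter, Finset.mem_univ, true_and] at hb ⊢
    rw [← key]; simpa using hb

theorem descend3 {n k : ℕ} (ρ : KSub n 2 ≃ KSub n 2) (hkn : k + 3 < n)
    (h : QProp ρ (k+3)) : QProp ρ 3 := by
  induction k with
  | zero => exact h
  | succ k ih =>
    apply ih (by omega)
    exact descend ρ (by omega) (by omega) h

def ed {n : ℕ} (a b : Fin n) (h : a ≠ b) : KSub n 2 := ⟨{a, b}, Finset.card_pair h⟩

theorem adj_three {n : ℕ} {A B T : Finset (Fin n)} (hA : A.card = 2) (hB : B.card = 2)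
    (hT : T.card = 3) (hne : A ≠ B) (h1 : A ⊆ T) (h2 : B ⊆ T) :
    ∃ w a b, w ≠ a ∧ w ≠ b ∧ a ≠ b ∧ A = {w, a} ∧ B = {w, b} ∧ T = {w, a, b} := by
  classical
  have hu : A ∪ B = T := by
    apply Finset.eq_of_subset_of_card_le (Finset.union_subset h1 h2)
    by_contra hc
    have hAu : A = A ∪ B := Finset.eq_of_subset_of_card_le Finset.subset_union_left (by omega)
    have : B ⊆ A := by rw [hAu]; exact Finset.subset_union_right
    exact hne (Finset.eq_of_subset_of_card_le this (by omega)).symm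
  have hi : (A ∩ B).card = 1 := by
    have := Finset.card_union_add_card_inter A B
    rw [hu] at this; omega
  obtain ⟨w, hw⟩ := Finset.card_eq_one.1 hi
  have hwA : w ∈ A ∧ w ∈ B := by
    rw [← Finset.mem_inter, hw]; simp
  have ext1 : ∀ C : Finset (Fin n), C.card = 2 → w ∈ C → ∃ a, w ≠ a ∧ C = {w, a} := by
    intro C hC hwC
    have : (C.erase w).card = 1 := by rw [Finset.card_erase_of_mem hwC, hC]
    obtain ⟨a, ha⟩ := Finset.card_eq_one.1 this
    have haC : a ∈ C.erase w := by rw [ha]; simp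
    refine ⟨a, (Finset.ne_of_mem_erase haC).symm, ?_⟩
    rw [← Finset.insert_erase hwC, ha]
  obtain ⟨a, ha, hAa⟩ := ext1 A hA hwA.1
  obtain ⟨b, hb, hBb⟩ := ext1 B hB hwA.2
  refine ⟨w, a, b, ha, hb, ?_, hAa, hBb, ?_⟩
  · rintro rfl; exact hne (hAa.trans hBb.symm)
  · rw [← hu, hAa, hBb]; ext z; simp

theorem vertex_perm {n : ℕ} (hn : 3 ≤ n) (ρ : KSub n 2 ≃ KSub n 2) (h : QProp ρ 3) :
    ∃ σ : Equiv.Perm (Fin n), ∀ e, (ρ e).1 = e.1.image σ := by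
  classical
  have tri : ∀ v a b (hva : v ≠ a) (hvb : v ≠ b) (hab : a ≠ b), ∃ w x y,
      w ≠ x ∧ w ≠ y ∧ x ≠ y ∧ (ρ (ed v a hva)).1 = {w, x} ∧ (ρ (ed v b hvb)).1 = {w, y} ∧
      ∀ e, (ρ e).1 ⊆ {w, x, y} ↔ e.1 ⊆ {v, a, b} := by
    intro v a b hva hvb hab
    obtain ⟨T, hT⟩ := h ⟨{v, a, b}, Finset.card_eq_three.2 ⟨v, a, b, hva, hvb, hab, rfl⟩⟩
    have hne : (ρ (ed v a hva)).1 ≠ (ρ (ed v b hvb)).1 := by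
      intro hh
      have := congrArg Subtype.val (ρ.injective (Subtype.ext hh))
      simp only [ed] at this
      have hb : b ∈ ({v, a} : Finset (Fin n)) := by rw [this]; simp
      simp at hb
      rcases hb with hb | hb
      · exact hvb hb.symm
      · exact hab hb.symm
    obtain ⟨w, x, y, h1, h2, h3, h4, h5, h6⟩ := adj_three (ρ (ed v a hva)).2 (ρ (ed v b hvb)).2
      T.2 hne ((hT _).2 (by intro z; simp [ed]; tauto)) ((hT _).2 (by intro z; simp [ed]; tauto))
    exact ⟨w, x, y, h1, h2, h3, h4, h5, by intro e; rw [← h6]; exact hT e⟩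
  have star : ∀ v, ∃ w, ∀ a (hva : v ≠ a), w ∈ (ρ (ed v a hva)).1 := by
    intro v
    have hc : 1 < (Finset.univ.erase v).card := by simp; omega
    obtain ⟨a, ha, b, hb, hab⟩ := Finset.one_lt_card.1 hc
    have hva : v ≠ a := (Finset.ne_of_mem_erase ha).symm
    have hvb : v ≠ b := (Finset.ne_of_mem_erase hb).symm
    obtain ⟨w, x, y, hwx, hwy, hxy, hA, hB, hT⟩ := tri v a b hva hvb hab
    refine ⟨w, ?_⟩
    intro c hvc
    by_cases hca : c = a
    · subst hca; rw [hA]; simp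
    by_cases hcb : c = b
    · subst hcb; rw [hB]; simp
    by_contra hw
    obtain ⟨w1, x1, y1, h1, h2, h3, hA1, hC1, -⟩ := tri v a c hva hvc (Ne.symm hca)
    obtain ⟨w2, x2, y2, g1, g2, g3, hB2, hC2, -⟩ := tri v b c hvb hvc (Ne.symm hcb)
    have hw1 : w1 = x := by
      have m : w1 ∈ (ρ (ed v a hva)).1 := by rw [hA1]; simp
      rw [hA] at m
      simp at m
      rcases m with m | m
      · exfalso; apply hw; rw [hC1, m]; simp
      · exact m
    have hw2 : w2 = y := by
      have m : w2 ∈ (ρ (ed v b hvb)).1 := by rw [hB2]; simp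
      rw [hB] at m
      simp at m
      rcases m with m | m
      · exfalso; apply hw; rw [hC2, m]; simp
      · exact m
    have hxy2 : ({x, y} : Finset (Fin n)) = (ρ (ed v c hvc)).1 := by
      apply Finset.eq_of_subset_of_card_le
      · intro z hz
        simp at hz
        rcases hz with rfl | rfl
        · rw [hC1, hw1]; simp
        · rw [hC2, hw2]; simp
      · rw [(ρ (ed v c hvc)).2, Finset.card_pair hxy]
    have := (hT (ed v c hvc)).1 (by rw [← hxy2]; intro z; simp; tauto)
    have := this (show c ∈ _ by simp [ed])
    simp at this
    rcases this with h | h | h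
    · exact hvc h.symm
    · exact hca h
    · exact hcb h
  choose σ hσ using star
  have hinj : Function.Injective σ := by
    intro u v huv
    by_contra hne
    obtain ⟨x, hx⟩ : ∃ x, x ∉ ({u, v} : Finset (Fin n)) := by
      by_contra hcon
      push Not at hcon
      have : (Finset.univ : Finset (Fin n)) ⊆ {u, v} := fun x _ => hcon x
      have := Finset.card_le_card this
      rw [Finset.card_pair hne] at this
      simp at this; omega
    simp only [Finset.mem_insert, Finset.mem_singleton, not_or] at hx
    have hxu : u ≠ x := Ne.symm hx.1
    have hxv : v ≠ x := Ne.symm hx.2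
    obtain ⟨w, p, q, hwp, hwq, hpq, hA, hB, hT⟩ := tri x u v hxu.symm hxv.symm hne
    have m1 : σ u ∈ ({w, p} : Finset (Fin n)) := by
      rw [← hA]; convert hσ u x hxu using 3; simp [ed, Finset.pair_comm]
    have m2 : σ u ∈ ({w, q} : Finset (Fin n)) := by
      rw [← hB, huv]; convert hσ v x hxv using 3; simp [ed, Finset.pair_comm]
    have hw : σ u = w := by
      simp at m1 m2
      rcases m1 with m1 | m1
      · exact m1
      · rcases m2 with m2 | m2
        · exact m2
        · exact absurd (m1.symm.trans m2) hpq
    have m3 := hσ u v hne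
    rw [hw] at m3
    have m4 := (hT (ed u v hne)).2 (by intro z; simp [ed]; tauto)
    have hcard := (ρ (ed u v hne)).2
    obtain ⟨s, hs, hsw⟩ := Finset.exists_mem_ne (by rw [hcard]; norm_num) w
    have e1 : (ρ (ed u v hne)).1 = {w, s} := by
      symm
      apply Finset.eq_of_subset_of_card_le
      · intro z hz; simp at hz; rcases hz with rfl | rfl <;> assumption
      · rw [hcard, Finset.card_pair hsw.symm]
    have := m4 hs
    simp at this
    rcases this with h | h | h
    · exact hsw h
    · rw [h, ← hA] at e1
      have := congrArg Subtype.val (ρ.injective (Subtype.ext e1))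
      simp only [ed] at this
      have : x ∈ ({u, v} : Finset (Fin n)) := by rw [this]; simp
      simp at this; tauto
    · rw [h, ← hB] at e1
      have := congrArg Subtype.val (ρ.injective (Subtype.ext e1))
      simp only [ed] at this
      have : x ∈ ({u, v} : Finset (Fin n)) := by rw [this]; simp
      simp at this; tauto
  refine ⟨Equiv.ofBijective σ (Finite.injective_iff_bijective.1 hinj), ?_⟩
  rintro ⟨e, he⟩
  obtain ⟨a, b, hab, rfl⟩ := Finset.card_eq_two.1 he
  symm
  apply Finset.eq_of_subset_of_card_le
  · intro z hz
    simp at hz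
    rcases hz with rfl | rfl
    · exact hσ a b hab
    · convert hσ b a hab.symm using 3; simp [ed, Finset.pair_comm]
  · rw [(ρ _).2, Finset.card_image_of_injective _ (Equiv.injective _)]
    exact he.ge

theorem comb {n t : ℕ} (ht : 2 ≤ t) (htn : t ≤ n - 1)
    (R : KSub n 2 → KSub n 2 → Prop) (hsurj : ∀ f, ∃ e, R e f)
    (h : ∀ k, k = t ∨ k = t + 1 → ∃ π : KSub n k → KSub n k, Function.Injective π ∧
      ∀ S e f, R e f → f.1 ⊆ (π S).1 → e.1 ⊆ S.1) :
    ∃ σ : Equiv.Perm (Fin n), ∀ e f, R e f → f.1 = e.1.image σ := by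
  classical
  obtain ⟨π, hπ, hπR⟩ := h t (Or.inl rfl)
  have hb := Finite.injective_iff_bijective.1 hπ
  have hiff : ∀ S e f, R e f → (f.1 ⊆ (π S).1 ↔ e.1 ⊆ S.1) := fun S e f hef =>
    iff_of_inj π hπ (by rw [e.2, f.2]) (fun S => hπR S e f hef) S
  have u1 : ∀ e f f', R e f → R e f' → f = f' := by
    intro e f f' h1 h2
    apply Subtype.ext
    apply eq_of_sub ht htn f.2 f'.2
    intro S
    obtain ⟨S, rfl⟩ := hb.2 S
    rw [hiff S e f h1, hiff S e f' h2]; exact id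
  choose τ hτ using hsurj
  have τinj : Function.Injective τ := fun f f' hff =>
    u1 (τ f) f f' (hτ f) (by rw [hff]; exact hτ f')
  let ρ : KSub n 2 ≃ KSub n 2 :=
    (Equiv.ofBijective τ (Finite.injective_iff_bijective.1 τinj)).symm
  have hρ : ∀ e, R e (ρ e) := by
    intro e
    have h1 := hτ (ρ e)
    have h2 : τ (ρ e) = e := (Equiv.ofBijective τ
      (Finite.injective_iff_bijective.1 τinj)).apply_symm_apply e
    rwa [h2] at h1
  have hQ : ∀ k, k = t ∨ k = t + 1 → QProp ρ k := by
    intro k hk S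
    obtain ⟨π, hπ, hπR⟩ := h k hk
    exact ⟨π S, fun e => iff_of_inj π hπ (by rw [e.2, (ρ e).2])
      (fun S => hπR S e _ (hρ e)) S⟩
  have hQ3 : QProp ρ 3 := by
    rcases Nat.lt_or_ge t 3 with h3 | h3
    · exact hQ 3 (by omega)
    · obtain ⟨m, rfl⟩ := Nat.exists_eq_add_of_le' h3
      exact descend3 ρ (by omega) (hQ _ (Or.inl rfl))
  obtain ⟨σ, hσ⟩ := vertex_perm (by omega) ρ hQ3
  refine ⟨σ, fun e f hef => ?_⟩
  rw [u1 e f (ρ e) hef (hρ e), hσ]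

theorem SPlus.diag {n : ℕ} {X : Matrix (Fin n) (Fin n) ℝ} (hX : X ∈ SPlus n) (i : Fin n) :
    X i i = 0 := by
  have h := hX.2.2
  simp only [Matrix.trace, Matrix.diag_apply] at h
  rw [Finset.sum_eq_zero_iff_of_nonneg (fun i _ => hX.1 i i)] at h
  exact h i (Finset.mem_univ i)

theorem mem_SPlus_of {n : ℕ} {X : Matrix (Fin n) (Fin n) ℝ} (h0 : ∀ i j, 0 ≤ X i j)
    (hs : ∀ i j, X i j = X j i) (hd : ∀ i, X i i = 0) : X ∈ SPlus n :=
  ⟨h0, by ext i j; exact hs j i, by simp [Matrix.trace, hd]⟩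

/-- The matrix of a single edge. -/
noncomputable def edgeMat {n : ℕ} (a b : Fin n) : Matrix (Fin n) (Fin n) ℝ :=
  Matrix.of fun i j => if a ≠ b ∧ ((i = a ∧ j = b) ∨ (i = b ∧ j = a)) then 1 else 0

theorem edgeMat_mem {n : ℕ} (a b : Fin n) : edgeMat a b ∈ SPlus n := by
  apply mem_SPlus_of
  · intro i j; simp only [edgeMat, Matrix.of_apply]; split_ifs <;> norm_num
  · intro i j; simp only [edgeMat, Matrix.of_apply]; congr 1; simp only [eq_iff_iff]; tauto
  · intro i; simp only [edgeMat, Matrix.of_apply]; rw [if_neg]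
    rintro ⟨h, ⟨rfl, rfl⟩ | ⟨rfl, rfl⟩⟩ <;> exact h rfl

theorem SPlus.add {n : ℕ} {X Y : Matrix (Fin n) (Fin n) ℝ} (hX : X ∈ SPlus n) (hY : Y ∈ SPlus n) :
    X + Y ∈ SPlus n :=
  ⟨fun i j => add_nonneg (hX.1 i j) (hY.1 i j), hX.2.1.add hY.2.1, by
    rw [Matrix.trace_add, hX.2.2, hY.2.2, add_zero]⟩

theorem SPlus.smul {n : ℕ} {X : Matrix (Fin n) (Fin n) ℝ} (hX : X ∈ SPlus n) {c : ℝ} (hc : 0 ≤ c) :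
    c • X ∈ SPlus n :=
  ⟨fun i j => mul_nonneg hc (hX.1 i j), hX.2.1.smul c, by
    rw [Matrix.trace_smul, hX.2.2, smul_zero]⟩

theorem zero_mem_SPlus (n : ℕ) : (0 : Matrix (Fin n) (Fin n) ℝ) ∈ SPlus n :=
  mem_SPlus_of (by simp) (by simp) (by simp)

theorem SPlus.sum {n : ℕ} {ι : Type*} (s : Finset ι) (f : ι → Matrix (Fin n) (Fin n) ℝ)
    (hf : ∀ i, f i ∈ SPlus n) : ∑ i ∈ s, f i ∈ SPlus n := by
  classical
  induction s using Finset.induction_on with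
  | empty => simpa using zero_mem_SPlus n
  | insert a s ha ih => rw [Finset.sum_insert ha]; exact SPlus.add (hf a) ih

theorem decomp {n : ℕ} {X : Matrix (Fin n) (Fin n) ℝ} (hX : X ∈ SPlus n) :
    X = ∑ p : Fin n × Fin n, (X p.1 p.2 / 2) • edgeMat p.1 p.2 := by
  ext i j
  rw [Matrix.sum_apply]
  simp only [Matrix.smul_apply, edgeMat, Matrix.of_apply, smul_eq_mul, mul_ite, mul_one, mul_zero]
  by_cases hij : i = j
  · subst hij
    rw [SPlus.diag hX, Finset.sum_eq_zero]
    intro p _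
    rw [if_neg]
    rintro ⟨h, ⟨h1, h2⟩ | ⟨h1, h2⟩⟩ <;> exact h (by rw [← h1, ← h2])
  · rw [← Finset.sum_filter]
    have : (Finset.univ.filter fun p : Fin n × Fin n =>
        p.1 ≠ p.2 ∧ ((i = p.1 ∧ j = p.2) ∨ (i = p.2 ∧ j = p.1))) = {(i, j), (j, i)} := by
      ext ⟨a, b⟩
      simp only [Finset.mem_filter, Finset.mem_univ, true_and, Finset.mem_insert,
        Finset.mem_singleton, Prod.mk.injEq]
      grind
    rw [this, Finset.sum_pair (by simp [hij])]
    have := hX.2.1.apply i j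
    simp only [this]; ring

section
variable {n : ℕ} {φ : Matrix (Fin n) (Fin n) ℝ → Matrix (Fin n) (Fin n) ℝ}

theorem phi_sum
    (hadd : ∀ X ∈ SPlus n, ∀ Y ∈ SPlus n, φ (X + Y) = φ X + φ Y)
    (hsmul : ∀ c : ℝ, 0 ≤ c → ∀ X ∈ SPlus n, φ (c • X) = c • φ X)
    {ι : Type*} (s : Finset ι) (f : ι → Matrix (Fin n) (Fin n) ℝ) (hf : ∀ i, f i ∈ SPlus n) :
    φ (∑ i ∈ s, f i) = ∑ i ∈ s, φ (f i) := by
  classical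
  induction s using Finset.induction_on with
  | empty =>
    have := hsmul 0 le_rfl 0 (zero_mem_SPlus n)
    simpa using this
  | insert a s ha ih =>
    rw [Finset.sum_insert ha, Finset.sum_insert ha, hadd _ (hf a) _ (SPlus.sum s f hf), ih]

theorem phi_apply
    (hadd : ∀ X ∈ SPlus n, ∀ Y ∈ SPlus n, φ (X + Y) = φ X + φ Y)
    (hsmul : ∀ c : ℝ, 0 ≤ c → ∀ X ∈ SPlus n, φ (c • X) = c • φ X)
    {X : Matrix (Fin n) (Fin n) ℝ} (hX : X ∈ SPlus n) (i j : Fin n) :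
    φ X i j = ∑ p : Fin n × Fin n, X p.1 p.2 / 2 * φ (edgeMat p.1 p.2) i j := by
  have h0 : ∀ p : Fin n × Fin n, 0 ≤ X p.1 p.2 / 2 := fun p => div_nonneg (hX.1 _ _) (by norm_num)
  conv_lhs => rw [decomp hX]
  rw [phi_sum hadd hsmul _ _ (fun p => SPlus.smul (edgeMat_mem _ _) (h0 p)), Matrix.sum_apply]
  apply Finset.sum_congr rfl
  intro p _
  rw [hsmul _ (h0 p) _ (edgeMat_mem _ _)]; rfl

theorem phi_zero_iff
    (hmaps : ∀ X ∈ SPlus n, φ X ∈ SPlus n)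
    (hadd : ∀ X ∈ SPlus n, ∀ Y ∈ SPlus n, φ (X + Y) = φ X + φ Y)
    (hsmul : ∀ c : ℝ, 0 ≤ c → ∀ X ∈ SPlus n, φ (c • X) = c • φ X)
    {X : Matrix (Fin n) (Fin n) ℝ} (hX : X ∈ SPlus n) (i j : Fin n) :
    φ X i j = 0 ↔ ∀ a b, X a b ≠ 0 → φ (edgeMat a b) i j = 0 := by
  rw [phi_apply hadd hsmul hX, Finset.sum_eq_zero_iff_of_nonneg]
  · constructor
    · intro h a b hab
      have := h (a, b) (Finset.mem_univ _)
      rcases mul_eq_zero.1 this with h | h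
      · exfalso; apply hab; simpa using h
      · exact h
    · rintro h ⟨a, b⟩ -
      by_cases hab : X a b = 0
      · simp [hab]
      · simp [h a b hab]
  · intro p _
    exact mul_nonneg (div_nonneg (hX.1 _ _) (by norm_num)) ((hmaps _ (edgeMat_mem _ _)).1 _ _)
end

def IndepOn {n : ℕ} (X : Matrix (Fin n) (Fin n) ℝ) (S : Finset (Fin n)) : Prop :=
  ∀ i ∈ S, ∀ j ∈ S, X i j = 0

theorem le_indep_iff {n : ℕ} (X : Matrix (Fin n) (Fin n) ℝ) (k : ℕ) :
    k ≤ matIndepNum X ↔ ∃ S : KSub n k, IndepOn X S.1 := by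
  have hbdd : BddAbove {k | ∃ S : Finset (Fin n), (∀ i ∈ S, ∀ j ∈ S, X i j = 0) ∧ S.card = k} := by
    refine ⟨n, ?_⟩
    rintro k ⟨S, -, rfl⟩
    simpa using Finset.card_le_univ S
  have hne : {k | ∃ S : Finset (Fin n), (∀ i ∈ S, ∀ j ∈ S, X i j = 0) ∧ S.card = k}.Nonempty :=
    ⟨0, ∅, by simp, by simp⟩
  constructor
  · intro h
    obtain ⟨S, hS, hc⟩ := Nat.sSup_mem hne hbdd
    change S.card = matIndepNum X at hc
    obtain ⟨T, hT, hTc⟩ := Finset.exists_subset_card_eq (hc ▸ h : k ≤ S.card)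
    exact ⟨⟨T, hTc⟩, fun i hi j hj => hS i (hT hi) j (hT hj)⟩
  · rintro ⟨S, hS⟩
    exact le_csSup hbdd ⟨S.1, hS, S.2⟩

theorem indep_mono {n : ℕ} {X Y : Matrix (Fin n) (Fin n) ℝ} (h : ∀ i j, X i j = 0 → Y i j = 0) :
    matIndepNum X ≤ matIndepNum Y := by
  obtain ⟨S, hS⟩ := (le_indep_iff X _).1 le_rfl
  exact (le_indep_iff Y _).2 ⟨S, fun i hi j hj => h i j (hS i hi j hj)⟩

/-- All edges not contained in `S`. -/
noncomputable def offMat {n : ℕ} (S : Finset (Fin n)) : Matrix (Fin n) (Fin n) ℝ :=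
  Matrix.of fun i j => if i ≠ j ∧ ¬ (i ∈ S ∧ j ∈ S) then 1 else 0

theorem offMat_ne {n : ℕ} (S : Finset (Fin n)) (i j : Fin n) :
    offMat S i j ≠ 0 ↔ i ≠ j ∧ ¬ (i ∈ S ∧ j ∈ S) := by
  simp [offMat]

theorem offMat_mem {n : ℕ} (S : Finset (Fin n)) : offMat S ∈ SPlus n := by
  apply mem_SPlus_of
  · intro i j; simp only [offMat, Matrix.of_apply]; split_ifs <;> norm_num
  · intro i j; simp only [offMat, Matrix.of_apply]; congr 1; simp only [eq_iff_iff]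
    constructor <;> rintro ⟨h1, h2⟩ <;> exact ⟨Ne.symm h1, fun h => h2 h.symm⟩
  · intro i; simp [offMat]

theorem offMat_indep_le {n : ℕ} (S : Finset (Fin n)) : matIndepNum (offMat S) ≤ max S.card 1 := by
  obtain ⟨T, hT⟩ := (le_indep_iff (offMat S) _).1 le_rfl
  rw [← T.2]
  by_cases h : T.1 ⊆ S
  · exact (Finset.card_le_card h).trans (le_max_left _ _)
  · refine le_trans ?_ (le_max_right _ _)
    obtain ⟨x, hx, hxS⟩ := Finset.not_subset.1 h
    rw [Finset.card_le_one]
    have : ∀ y ∈ T.1, y = x := by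
      intro y hy
      by_contra hne
      exact (offMat_ne S y x).2 ⟨hne, fun h => hxS h.2⟩ (hT y hy x hx)
    intro a ha b hb
    rw [this a ha, this b hb]

theorem offMat_indep {n : ℕ} (S : Finset (Fin n)) (h : 1 ≤ S.card) :
    matIndepNum (offMat S) = S.card := by
  apply le_antisymm
  · have := offMat_indep_le S
    omega
  · refine (le_indep_iff _ _).2 ⟨⟨S, rfl⟩, fun i hi j hj => ?_⟩
    by_contra hne
    exact ((offMat_ne S i j).1 hne).2 ⟨hi, hj⟩

theorem main_forward (n t : ℕ) (ht2 : 2 ≤ t) (htn : t ≤ n - 1)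
    (φ : Matrix (Fin n) (Fin n) ℝ → Matrix (Fin n) (Fin n) ℝ)
    (hmaps : ∀ X ∈ SPlus n, φ X ∈ SPlus n)
    (hadd : ∀ X ∈ SPlus n, ∀ Y ∈ SPlus n, φ (X + Y) = φ X + φ Y)
    (hsmul : ∀ c : ℝ, 0 ≤ c → ∀ X ∈ SPlus n, φ (c • X) = c • φ X)
    (hJ : φ (allOnes n - 1) = allOnes n - 1)
    (hα : ∀ X ∈ SPlus n, (matIndepNum (φ X) = t ↔ matIndepNum X = t)) :
    ∃ σ : Equiv.Perm (Fin n), ∀ X ∈ SPlus n, ∀ p q, φ X (σ p) (σ q) = X p q := by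
  classical
  have hz := fun {X} (hX : X ∈ SPlus n) i j => phi_zero_iff hmaps hadd hsmul hX i j
  have hJe : ∀ i j, (allOnes n - 1) i j = if i = j then (0 : ℝ) else 1 := by
    intro i j
    simp only [allOnes, Matrix.sub_apply, Matrix.of_apply, Matrix.one_apply]
    split_ifs <;> norm_num
  have hJm : allOnes n - 1 ∈ SPlus n := by
    apply mem_SPlus_of
    · intro i j; rw [hJe]; split_ifs <;> norm_num
    · intro i j; rw [hJe, hJe]; simp only [eq_comm]
    · intro i; rw [hJe]; simp
  let R : KSub n 2 → KSub n 2 → Prop := fun e f =>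
    ∃ a b i j, e.1 = {a, b} ∧ f.1 = {i, j} ∧ a ≠ b ∧ φ (edgeMat a b) i j ≠ 0
  have hsurj : ∀ f, ∃ e, R e f := by
    rintro ⟨f, hf⟩
    obtain ⟨i, j, hij, rfl⟩ := Finset.card_eq_two.1 hf
    have h1 : φ (allOnes n - 1) i j ≠ 0 := by rw [hJ, hJe, if_neg hij]; norm_num
    rw [Ne, hz hJm] at h1
    push Not at h1
    obtain ⟨a, b, hab, h2⟩ := h1
    have hab' : a ≠ b := by rintro rfl; rw [hJe] at hab; simp at hab
    exact ⟨⟨{a, b}, Finset.card_pair hab'⟩, a, b, i, j, rfl, rfl, hab', h2⟩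
  have hmono : ∀ S T : Finset (Fin n), S ⊆ T →
      matIndepNum (φ (offMat S)) ≤ matIndepNum (φ (offMat T)) := by
    intro S T hST
    apply indep_mono
    intro i j
    rw [hz (offMat_mem S), hz (offMat_mem T)]
    intro h a b hab
    apply h
    rw [offMat_ne] at hab ⊢
    exact ⟨hab.1, fun hh => hab.2 ⟨hST hh.1, hST hh.2⟩⟩
  have ht : ∀ S : Finset (Fin n), S.card = t → matIndepNum (φ (offMat S)) = t := by
    intro S hS
    rw [hα _ (offMat_mem S), offMat_indep S (by omega), hS]
  have hex : ∀ k, k = t ∨ k = t + 1 → ∀ S : KSub n k, ∃ S' : KSub n k,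
      IndepOn (φ (offMat S.1)) S'.1 := by
    intro k hk S
    rw [← le_indep_iff]
    rcases hk with rfl | rfl
    · exact (ht S.1 S.2).ge
    · obtain ⟨S0, hS0, hc⟩ := Finset.exists_subset_card_eq (s := S.1) (n := t) (by rw [S.2]; omega)
      have h1 := hmono _ _ hS0
      rw [ht S0 hc] at h1
      have h2 : matIndepNum (φ (offMat S.1)) ≠ t := by
        rw [Ne, hα _ (offMat_mem _), offMat_indep _ (by rw [S.2]; omega), S.2]; omega
      omega
  obtain ⟨σ, hσ⟩ := comb ht2 htn R hsurj (by
    intro k hk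
    choose π hπ using hex k hk
    refine ⟨π, ?_, ?_⟩
    · intro S1 S2 h12
      by_contra hne
      have hle : k ≤ matIndepNum (φ (offMat (S1.1 ∩ S2.1))) := by
        rw [le_indep_iff]
        refine ⟨π S1, fun i hi j hj => ?_⟩
        rw [hz (offMat_mem _)]
        intro a b hab
        rw [offMat_ne] at hab
        by_cases h1 : a ∈ S1.1 ∧ b ∈ S1.1
        · have h2 : ¬ (a ∈ S2.1 ∧ b ∈ S2.1) := by
            intro h2; apply hab.2; simp [h1, h2]
          have := hπ S2 i (h12 ▸ hi) j (h12 ▸ hj)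
          rw [hz (offMat_mem _)] at this
          exact this a b ((offMat_ne _ _ _).2 ⟨hab.1, h2⟩)
        · have := hπ S1 i hi j hj
          rw [hz (offMat_mem _)] at this
          exact this a b ((offMat_ne _ _ _).2 ⟨hab.1, h1⟩)
      have hcard : (S1.1 ∩ S2.1).card < k := by
        by_contra hcon
        have e1 : S1.1 ∩ S2.1 = S1.1 :=
          Finset.eq_of_subset_of_card_le Finset.inter_subset_left (by rw [S1.2]; omega)
        have e2 : S1.1 ∩ S2.1 = S2.1 :=
          Finset.eq_of_subset_of_card_le Finset.inter_subset_right (by rw [S2.2]; omega)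
        exact hne (Subtype.ext (e1.symm.trans e2))
      rcases hk with rfl | rfl
      · have h1 := hmono _ _ (Finset.inter_subset_left : S1.1 ∩ S2.1 ⊆ S1.1)
        rw [ht S1.1 S1.2] at h1
        have h2 := (hα _ (offMat_mem _)).1 (le_antisymm h1 hle)
        have h3 := offMat_indep_le (S1.1 ∩ S2.1)
        omega
      · obtain ⟨S0, hS0, -, hc⟩ := Finset.exists_subsuperset_card_eq (n := t)
          (Finset.subset_univ (S1.1 ∩ S2.1)) (by omega) (by simp; omega)
        have h1 := hmono _ _ hS0
        rw [ht S0 hc] at h1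
        omega
    · rintro S e f ⟨a, b, i, j, he, hf, hab, hne⟩ hfS
      rw [he]
      rw [hf] at hfS
      by_contra hcon
      apply hne
      have := hπ S i (hfS (by simp)) j (hfS (by simp))
      rw [hz (offMat_mem _)] at this
      apply this
      rw [offMat_ne]
      refine ⟨hab, fun h => hcon ?_⟩
      intro z hz
      simp at hz
      rcases hz with rfl | rfl
      exacts [h.1, h.2])
  refine ⟨σ, fun X hX p q => ?_⟩
  by_cases hpq : p = q
  · subst hpq
    rw [SPlus.diag hX, SPlus.diag (hmaps X hX)]
  have key : φ X (σ p) (σ q) = X p q * φ (allOnes n - 1) (σ p) (σ q) := by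
    rw [phi_apply hadd hsmul hX, phi_apply hadd hsmul hJm, Finset.mul_sum]
    apply Finset.sum_congr rfl
    rintro ⟨a, b⟩ -
    by_cases h0 : φ (edgeMat a b) (σ p) (σ q) = 0
    · simp [h0]
    by_cases hab : a = b
    · subst hab
      simp [SPlus.diag hX, SPlus.diag hJm]
    have h1 := hσ ⟨{a, b}, Finset.card_pair hab⟩
      ⟨{σ p, σ q}, Finset.card_pair (σ.injective.ne hpq)⟩ ⟨a, b, σ p, σ q, rfl, rfl, hab, h0⟩
    have h2 : ({p, q} : Finset (Fin n)) = {a, b} := by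
      apply Finset.image_injective σ.injective
      simpa using h1
    have h3 : X a b = X p q := by
      have hp : p ∈ ({a, b} : Finset (Fin n)) := by rw [← h2]; simp
      have hq : q ∈ ({a, b} : Finset (Fin n)) := by rw [← h2]; simp
      simp at hp hq
      rcases hp with rfl | rfl <;> rcases hq with rfl | rfl
      · exact absurd rfl hpq
      · rfl
      · exact hX.2.1.apply _ _
      · exact absurd rfl hpq
    simp only [h3, hJe, if_neg hab]; ring
  rw [key, hJ, hJe, if_neg (σ.injective.ne hpq), mul_one]

theorem perm_apply {n : ℕ} (σ : Equiv.Perm (Fin n)) (X : Matrix (Fin n) (Fin n) ℝ) (p q : Fin n) :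
    ((Equiv.Perm.permMatrix ℝ σ)ᵀ * X * Equiv.Perm.permMatrix ℝ σ) (σ p) (σ q) = X p q := by
  simp [Matrix.mul_apply, Equiv.Perm.permMatrix, PEquiv.toMatrix_apply, Equiv.toPEquiv_apply]

theorem stmt0 (n t : ℕ) (ht2 : 2 ≤ t) (htn : t ≤ n - 1)
    (φ : Matrix (Fin n) (Fin n) ℝ → Matrix (Fin n) (Fin n) ℝ)
    (hmaps : ∀ X ∈ SPlus n, φ X ∈ SPlus n)
    (hadd : ∀ X ∈ SPlus n, ∀ Y ∈ SPlus n, φ (X + Y) = φ X + φ Y)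
    (hsmul : ∀ c : ℝ, 0 ≤ c → ∀ X ∈ SPlus n, φ (c • X) = c • φ X) :
    (φ (allOnes n - 1) = allOnes n - 1 ∧
        ∀ X ∈ SPlus n, (matIndepNum (φ X) = t ↔ matIndepNum X = t)) ↔
      ∃ σ : Equiv.Perm (Fin n), ∀ X ∈ SPlus n,
        φ X = (Equiv.Perm.permMatrix ℝ σ)ᵀ * X * Equiv.Perm.permMatrix ℝ σ := by
  constructor
  · rintro ⟨hJ, hα⟩
    obtain ⟨σ, hσ⟩ := main_forward n t ht2 htn φ hmaps hadd hsmul hJ hα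
    refine ⟨σ, fun X hX => ?_⟩
    ext i j
    obtain ⟨p, rfl⟩ := σ.surjective i
    obtain ⟨q, rfl⟩ := σ.surjective j
    rw [hσ X hX, perm_apply]
  · rintro ⟨σ, hσ⟩
    have hσ' : ∀ X ∈ SPlus n, ∀ p q, φ X (σ p) (σ q) = X p q := by
      intro X hX p q
      rw [hσ X hX, perm_apply]
    have hJe : ∀ i j, (allOnes n - 1) i j = if i = j then (0 : ℝ) else 1 := by
      intro i j
      simp only [allOnes, Matrix.sub_apply, Matrix.of_apply, Matrix.one_apply]
      split_ifs <;> norm_num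
    have hJm : allOnes n - 1 ∈ SPlus n := by
      apply mem_SPlus_of
      · intro i j; rw [hJe]; split_ifs <;> norm_num
      · intro i j; rw [hJe, hJe]; simp only [eq_comm]
      · intro i; rw [hJe]; simp
    refine ⟨?_, fun X hX => ?_⟩
    · ext i j
      obtain ⟨p, rfl⟩ := σ.surjective i
      obtain ⟨q, rfl⟩ := σ.surjective j
      rw [hσ' _ hJm, hJe, hJe]
      simp
    · have : matIndepNum (φ X) = matIndepNum X := by
        apply le_antisymm
        · obtain ⟨S, hS⟩ := (le_indep_iff (φ X) _).1 le_rfl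
          refine (le_indep_iff X _).2 ⟨⟨S.1.map σ.symm.toEmbedding, by simp [S.2]⟩, ?_⟩
          intro i hi j hj
          simp only [Finset.mem_map_equiv, Equiv.symm_symm] at hi hj
          rw [← hσ' X hX]
          exact hS _ hi _ hj
        · obtain ⟨S, hS⟩ := (le_indep_iff X _).1 le_rfl
          refine (le_indep_iff (φ X) _).2 ⟨⟨S.1.map σ.toEmbedding, by simp [S.2]⟩, ?_⟩
          intro i hi j hj
          simp only [Finset.mem_map_equiv] at hi hj
          have := hS _ hi _ hj
          rw [← hσ' X hX] at this
          simpa using this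
      rw [this]
end

section
/- Let G be a simple graph on n vertices with independence number α ≥ n/2 + 1. Then the intersection of all maximum independent sets of G has cardinality at least 2α − n. -/
/-- The independence number of a simple graph: the maximum cardinality of a set
of pairwise nonadjacent vertices. -/
noncomputable def indepNum {V : Type*} (G : SimpleGraph V) : ℕ :=
  sSup {k | ∃ s : Finset V, (∀ a ∈ s, ∀ b ∈ s, a ≠ b → ¬ G.Adj a b) ∧ s.card = k}

/-- A set of vertices is independent if its vertices are pairwise nonadjacent. -/
def IsIndepSet' {V : Type*} (G : SimpleGraph V) (S : Set V) : Prop :=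
  S.Pairwise fun a b => ¬ G.Adj a b

lemma indep_bdd {V : Type*} [Fintype V] (G : SimpleGraph V) :
    BddAbove {k | ∃ s : Finset V, (∀ a ∈ s, ∀ b ∈ s, a ≠ b → ¬ G.Adj a b) ∧ s.card = k} := by
  refine ⟨Fintype.card V, ?_⟩
  rintro k ⟨s, -, rfl⟩
  exact s.card_le_univ

lemma indep_le {V : Type*} [Fintype V] (G : SimpleGraph V) (s : Finset V)
    (hs : ∀ a ∈ s, ∀ b ∈ s, a ≠ b → ¬ G.Adj a b) : s.card ≤ indepNum G :=
  le_csSup (indep_bdd G) ⟨s, hs, rfl⟩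

lemma indep_exists {V : Type*} [Fintype V] (G : SimpleGraph V) :
    ∃ s : Finset V, (∀ a ∈ s, ∀ b ∈ s, a ≠ b → ¬ G.Adj a b) ∧ s.card = indepNum G :=
  Nat.sSup_mem (s := {k | ∃ s : Finset V, (∀ a ∈ s, ∀ b ∈ s, a ≠ b → ¬ G.Adj a b) ∧ s.card = k})
    ⟨0, ∅, by simp, by simp⟩ (indep_bdd G)

open Classical in
/-- For a nonempty family of maximum independent sets, twice the independence number is at most
the size of the intersection plus the size of the union. -/
lemma family_bound {V : Type*} [Fintype V] (G : SimpleGraph V) (F : Finset (Finset V))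
    (hne : F.Nonempty)
    (hF : ∀ s ∈ F, (∀ a ∈ s, ∀ b ∈ s, a ≠ b → ¬ G.Adj a b) ∧ s.card = indepNum G) :
    2 * indepNum G ≤ (Finset.univ.filter fun v => ∀ T ∈ F, v ∈ T).card +
      (Finset.univ.filter fun v => ∃ T ∈ F, v ∈ T).card := by
  induction hne using Finset.Nonempty.cons_induction with
  | singleton a =>
    have := (hF a (by simp)).2
    simp
    omega
  | cons S F hS hne ih =>
    have ih := ih (fun s hs => hF s (by simp [hs]))
    obtain ⟨hSi, hSc⟩ := hF S (by simp)
    set C := Finset.univ.filter fun v => ∀ T ∈ F, v ∈ T with hC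
    set U := Finset.univ.filter fun v => ∃ T ∈ F, v ∈ T with hU
    have e1 : (Finset.univ.filter fun v => ∀ T ∈ Finset.cons S F hS, v ∈ T) = C ∩ S := by
      ext v; simp [hC, and_comm]
    have e2 : (Finset.univ.filter fun v => ∃ T ∈ Finset.cons S F hS, v ∈ T) = U ∪ S := by
      ext v; simp [hU, or_comm]
    rw [e1, e2]
    have mC : ∀ v, v ∈ C ↔ ∀ T ∈ F, v ∈ T := by simp [hC]
    have mU : ∀ v, v ∈ U ↔ ∃ T ∈ F, v ∈ T := by simp [hU]
    obtain ⟨T0, hT0⟩ := hne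
    have key : ∀ a ∈ C, ∀ b ∈ U, a ≠ b → ¬ G.Adj a b := by
      intro a ha b hb hab
      obtain ⟨T, hT, hbT⟩ := (mU b).1 hb
      exact (hF T (by simp [hT])).1 a ((mC a).1 ha T hT) b hbT hab
    have hCU : C ⊆ U := fun v hv => (mU v).2 ⟨T0, hT0, (mC v).1 hv T0 hT0⟩
    have h := indep_le G ((S ∩ U) ∪ (C \ S)) (by
      intro a ha b hb hab
      simp only [Finset.mem_union, Finset.mem_inter, Finset.mem_sdiff] at ha hb
      rcases ha with ha | ha
      · rcases hb with hb | hb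
        · exact hSi a ha.1 b hb.1 hab
        · exact fun h => key b hb.1 a ha.2 hab.symm h.symm
      · rcases hb with hb | hb
        · exact key a ha.1 b hb.2 hab
        · exact key a ha.1 b (hCU hb.1) hab)
    rw [Finset.card_union_of_disjoint (by
      rw [Finset.disjoint_left]; intro v; simp; tauto)] at h
    have h1 := Finset.card_union_add_card_inter U S
    have h2 := Finset.card_sdiff_add_card_inter C S
    rw [Finset.inter_comm S U] at h
    omega

theorem stmt2 (n : ℕ) (V : Type*) [Fintype V] (hcard : Fintype.card V = n)
    (G : SimpleGraph V) (hα : (n : ℝ) / 2 + 1 ≤ (indepNum G : ℝ)) :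
    2 * indepNum G - n ≤
      (⋂₀ {S : Set V | IsIndepSet' G S ∧ S.ncard = indepNum G}).ncard := by
  classical
  obtain ⟨s, hs⟩ := indep_exists G
  have h := family_bound G (Finset.univ.filter fun s : Finset V =>
    (∀ a ∈ s, ∀ b ∈ s, a ≠ b → ¬ G.Adj a b) ∧ s.card = indepNum G) ⟨s, by simpa using hs⟩
    (fun s hs => (Finset.mem_filter.1 hs).2)
  set F := (Finset.univ.filter fun s : Finset V =>
    (∀ a ∈ s, ∀ b ∈ s, a ≠ b → ¬ G.Adj a b) ∧ s.card = indepNum G) with hFdef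
  have hU := Finset.card_le_univ (Finset.univ.filter fun v => ∃ T ∈ F, v ∈ T)
  have hsub : ((Finset.univ.filter fun v => ∀ T ∈ F, v ∈ T : Finset V) : Set V) ⊆
      ⋂₀ {S : Set V | IsIndepSet' G S ∧ S.ncard = indepNum G} := by
    rintro v hv S ⟨hS, hSc⟩
    have hv' := (Finset.mem_filter.1 (Finset.mem_coe.1 hv)).2 S.toFinset (by
      refine Finset.mem_filter.2 ⟨Finset.mem_univ _, ?_, ?_⟩
      · intro a ha b hb hab
        exact hS (Set.mem_toFinset.1 ha) (Set.mem_toFinset.1 hb) hab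
      · rw [← hSc, Set.ncard_eq_toFinset_card'])
    exact Set.mem_toFinset.1 hv'
  have h3 := Set.ncard_le_ncard hsub (Set.toFinite _)
  rw [Set.ncard_coe_finset] at h3
  omega
end

section
/- Let n, t be integers with 1 ≤ t ≤ n−1. Suppose φ: 𝒢_n → 𝒢_n is a complete linear map satisfying: for all G ∈ 𝒢_n, α(φ(G)) = t if and only if α(G) = t. Then for all distinct i,j ∈ {1,...,n}, the graph φ(G_{ij}) has at least one edge. -/
/-- `G_{ij}`: the graph whose only edge is `(i, j)`. -/
def singleEdge {V : Type*} (i j : V) : SimpleGraph V :=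
  SimpleGraph.fromEdgeSet {s(i, j)}

/-- A map on graphs is linear if it preserves unions. -/
def IsLinearMap' {V : Type*} (φ : SimpleGraph V → SimpleGraph V) : Prop :=
  ∀ G H : SimpleGraph V, φ (G ⊔ H) = φ G ⊔ φ H

/-- A complete linear map: a linear map sending the complete graph to itself. -/
def IsCompleteLinearMap {V : Type*} (φ : SimpleGraph V → SimpleGraph V) : Prop :=
  IsLinearMap' φ ∧ φ ⊤ = ⊤

/-- A vertex permutation. -/
def IsVertexPermutation {V : Type*} (φ : SimpleGraph V → SimpleGraph V) : Prop :=
  ∃ σ : Equiv.Perm V, ∀ i j : V, i ≠ j → φ (singleEdge i j) = singleEdge (σ i) (σ j)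

/-- An edge permutation. -/
def IsEdgePermutation {V : Type*} (φ : SimpleGraph V → SimpleGraph V) : Prop :=
  φ ⊤ = ⊤ ∧ ∀ i j : V, i ≠ j → ((φ (singleEdge i j)).edgeSet).ncard = 1

theorem indepNum_eq_of {V : Type*} (G : SimpleGraph V) (k : ℕ) (s : Finset V)
    (hs : ∀ a ∈ s, ∀ b ∈ s, a ≠ b → ¬ G.Adj a b) (hk : s.card = k)
    (hle : ∀ u : Finset V, (∀ a ∈ u, ∀ b ∈ u, a ≠ b → ¬ G.Adj a b) → u.card ≤ k) :
    indepNum G = k := by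
  refine IsGreatest.csSup_eq ⟨⟨s, hs, hk⟩, ?_⟩
  rintro m ⟨u, hu, rfl⟩
  exact hle u hu

/-- The complement of the clique on `S`. -/
def coClique {V : Type*} (S : Finset V) : SimpleGraph V where
  Adj a b := a ≠ b ∧ ¬ (a ∈ S ∧ b ∈ S)
  symm := ⟨fun _ _ h => ⟨h.1.symm, fun h' => h.2 ⟨h'.2, h'.1⟩⟩⟩
  loopless := ⟨fun _ h => h.1 rfl⟩

theorem coClique_indep {V : Type*} (S u : Finset V)
    (hu : ∀ a ∈ u, ∀ b ∈ u, a ≠ b → ¬ (coClique S).Adj a b) : u.card ≤ 1 ∨ u ⊆ S := by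
  by_cases h : u.card ≤ 1
  · exact Or.inl h
  · right
    intro a ha
    obtain ⟨b, hb, hab⟩ := Finset.exists_mem_ne (by omega : 1 < u.card) a
    by_contra hS
    exact hu a ha b hb hab.symm ⟨hab.symm, fun h' => hS h'.1⟩

theorem stmt6 (n t : ℕ) (ht : 1 ≤ t) (htn : t ≤ n - 1)
    (φ : SimpleGraph (Fin n) → SimpleGraph (Fin n)) (hφ : IsCompleteLinearMap φ)
    (hpres : ∀ G : SimpleGraph (Fin n), indepNum (φ G) = t ↔ indepNum G = t) :
    ∀ i j : Fin n, i ≠ j → ((φ (singleEdge i j)).edgeSet).Nonempty := by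
  intro i j hij
  by_contra hne
  have hbot : φ (singleEdge i j) = ⊥ := by
    rw [Set.not_nonempty_iff_eq_empty] at hne
    exact SimpleGraph.edgeSet_eq_empty.1 hne
  obtain ⟨S, hS, hcard⟩ : ∃ S : Finset (Fin n), ({i, j} : Finset (Fin n)) ⊆ S ∧ S.card = t + 1 := by
    apply Finset.exists_superset_card_eq
    · rw [Finset.card_pair hij]; omega
    · rw [Fintype.card_fin]; omega
  have hi : i ∈ S := hS (by simp)
  have hj : j ∈ S := hS (by simp)
  have h1 : indepNum (coClique S) = t + 1 := by
    apply indepNum_eq_of _ _ S _ hcard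
    · intro u hu
      rcases coClique_indep S u hu with h | h
      · omega
      · exact hcard ▸ Finset.card_le_card h
    · intro a ha b hb _ h
      exact h.2 ⟨ha, hb⟩
  have h2 : indepNum (coClique S ⊔ singleEdge i j) = t := by
    apply indepNum_eq_of _ _ (S.erase i)
    · intro a ha b hb _ h
      rw [Finset.mem_erase] at ha hb
      rcases h with h | h
      · exact h.2 ⟨ha.2, hb.2⟩
      · simp only [singleEdge, SimpleGraph.fromEdgeSet_adj, Set.mem_singleton_iff, Sym2.eq_iff] at h
        rcases h.1 with h | h
        · exact ha.1 h.1
        · exact hb.1 h.2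
    · rw [Finset.card_erase_of_mem hi]; omega
    · intro u hu
      rcases coClique_indep S u (fun a ha b hb hab h => hu a ha b hb hab (Or.inl h)) with h | h
      · omega
      · have hlt : u ⊂ S := by
          refine h.ssubset_of_ne ?_
          rintro rfl
          refine hu i hi j hj hij (Or.inr ?_)
          simp [singleEdge, hij]
        have := Finset.card_lt_card hlt
        omega
  have h3 : φ (coClique S ⊔ singleEdge i j) = φ (coClique S) := by
    rw [hφ.1, hbot, sup_bot_eq]
  have h4 := (hpres _).2 h2
  rw [h3, hpres, h1] at h4
  omega
end

section
/- Let n, t be integers with 1 ≤ t ≤ n−1. Suppose φ: 𝒢_n → 𝒢_n is a complete linear map satisfying: for all G ∈ 𝒢_n, α(φ(G)) = t if and only if α(G) = t. Then for all distinct i,j ∈ {1,...,n}, the graph φ(G_{ij}) contains no two separate edges, i.e., any two distinct edges of φ(G_{ij}) share a common vertex. -/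
/-- `G` has an independent set of cardinality `k`. -/
def HasI {n : ℕ} (k : ℕ) (G : SimpleGraph (Fin n)) : Prop :=
  ∃ s : Finset (Fin n), (∀ a ∈ s, ∀ b ∈ s, a ≠ b → ¬ G.Adj a b) ∧ s.card = k

/-- The graph of all edges not contained in `S`. -/
def MM {n : ℕ} (S : Finset (Fin n)) : SimpleGraph (Fin n) where
  Adj a b := a ≠ b ∧ ¬ (a ∈ S ∧ b ∈ S)
  symm := ⟨fun a b h => ⟨h.1.symm, fun h' => h.2 ⟨h'.2, h'.1⟩⟩⟩
  loopless := ⟨fun a h => h.1 rfl⟩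

theorem HasI.mono_card {n k l : ℕ} {G : SimpleGraph (Fin n)} (h : HasI k G) (hl : l ≤ k) :
    HasI l G := by
  obtain ⟨s, hs, hc⟩ := h
  obtain ⟨u, hu, huc⟩ := Finset.exists_subset_card_eq (hc ▸ hl : l ≤ s.card)
  exact ⟨u, fun a ha b hb => hs a (hu ha) b (hu hb), huc⟩

theorem HasI.anti {n k : ℕ} {G H : SimpleGraph (Fin n)} (h : HasI k H) (hl : G ≤ H) :
    HasI k G := by
  obtain ⟨s, hs, hc⟩ := h
  exact ⟨s, fun a ha b hb hab hG => hs a ha b hb hab (hl hG), hc⟩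

theorem indepNum_eq_iff {n t : ℕ} (G : SimpleGraph (Fin n)) :
    indepNum G = t ↔ HasI t G ∧ ¬ HasI (t + 1) G := by
  have hb : BddAbove {k | HasI k G} := by
    refine ⟨n, ?_⟩
    rintro k ⟨s, -, rfl⟩
    simpa using Finset.card_le_univ s
  have hne : {k | HasI k G}.Nonempty := ⟨0, ∅, by simp, by simp⟩
  have hd : indepNum G = sSup {k | HasI k G} := rfl
  have hmem : HasI (indepNum G) G := Nat.sSup_mem hne hb
  have hle : ∀ k, HasI k G → k ≤ indepNum G := fun k hk => le_csSup hb hk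
  constructor
  · rintro rfl
    exact ⟨hmem, fun h => by have := hle _ h; omega⟩
  · rintro ⟨h1, h2⟩
    have := hle _ h1
    by_contra hne
    exact h2 (hmem.mono_card (by omega))

theorem subset_of_indep_MM {n k : ℕ} (hk : 2 ≤ k) {S U : Finset (Fin n)}
    (hU : ∀ a ∈ U, ∀ b ∈ U, a ≠ b → ¬ (MM S).Adj a b) (hc : U.card = k) : U ⊆ S := by
  intro a ha
  obtain ⟨b, hb, hab⟩ := Finset.exists_mem_ne (by omega : 1 < U.card) a
  by_contra h
  exact hU a ha b hb hab.symm ⟨hab.symm, fun h' => h h'.1⟩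

theorem indepNum_MM {n : ℕ} {S : Finset (Fin n)} (hS : 1 ≤ S.card) :
    indepNum (MM S) = S.card := by
  rw [indepNum_eq_iff]
  refine ⟨⟨S, fun a ha b hb _ h => h.2 ⟨ha, hb⟩, rfl⟩, ?_⟩
  rintro ⟨U, hU, hc⟩
  have := Finset.card_le_card (subset_of_indep_MM (by omega) hU hc)
  omega

theorem exists_sub {n t : ℕ} (htn : t < n) (G : SimpleGraph (Fin n)) (hG : ¬ HasI (t + 1) G) :
    ∃ H ≤ G, indepNum H = t := by
  obtain ⟨H, hHG, hmin⟩ := exists_minimal_le_of_wellFoundedLT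
    (fun H : SimpleGraph (Fin n) => ¬ HasI (t + 1) H) G hG
  refine ⟨H, hHG, (indepNum_eq_iff H).2 ⟨?_, hmin.1⟩⟩
  by_cases hbot : H = ⊥
  · exact absurd (HasI.mono_card (k := n) ⟨Finset.univ, by simp [hbot], by simp⟩ htn) hmin.1
  obtain ⟨a, b, hab⟩ := SimpleGraph.ne_bot_iff_exists_adj.1 hbot
  by_contra hcon
  have hlt : H.deleteEdges {s(a, b)} ≤ H := SimpleGraph.deleteEdges_le _
  have hI : HasI (t + 1) (H.deleteEdges {s(a, b)}) := by
    by_contra h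
    have := hmin.2 h hlt hab
    simp at this
  obtain ⟨s, hs, hc⟩ := hI
  by_cases has : a ∈ s
  · refine hcon ⟨s.erase a, ?_, by rw [Finset.card_erase_of_mem has]; omega⟩
    intro x hx y hy hxy hadj
    rw [Finset.mem_erase] at hx hy
    refine hs x hx.2 y hy.2 hxy ?_
    simp only [SimpleGraph.deleteEdges_adj, Set.mem_singleton_iff, Sym2.eq_iff]
    exact ⟨hadj, by rintro (⟨h, -⟩ | ⟨-, h⟩); exacts [hx.1 h, hy.1 h]⟩
  · refine hcon (HasI.mono_card (k := t + 1) ⟨s, ?_, hc⟩ (by omega))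
    intro x hx y hy hxy hadj
    refine hs x hx y hy hxy ?_
    simp only [SimpleGraph.deleteEdges_adj, Set.mem_singleton_iff, Sym2.eq_iff]
    exact ⟨hadj, by rintro (⟨h, -⟩ | ⟨-, h⟩); exacts [has (h ▸ hx), has (h ▸ hy)]⟩

theorem card_pairs_le {n : ℕ} (k : ℕ) {a b c d : Fin n} (hab : a ≠ b) (hcd : c ≠ d) :
    ((Finset.powersetCard k (Finset.univ : Finset (Fin n))).filter
      (fun T => a ∈ T ∧ b ∈ T)).card ≤
    ((Finset.powersetCard k (Finset.univ : Finset (Fin n))).filter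
      (fun T => c ∈ T ∧ d ∈ T)).card := by
  obtain ⟨σ, h1, h2⟩ : ∃ σ : Equiv.Perm (Fin n), σ a = c ∧ σ b = d := by
    refine ⟨(Equiv.swap a c).trans (Equiv.swap (Equiv.swap a c b) d), ?_, ?_⟩
    · rw [Equiv.trans_apply, Equiv.swap_apply_left]
      refine Equiv.swap_apply_of_ne_of_ne ?_ hcd
      intro h
      have : Equiv.swap a c a = Equiv.swap a c b := by rw [← h, Equiv.swap_apply_left]
      exact hab ((Equiv.swap a c).injective this)
    · rw [Equiv.trans_apply, Equiv.swap_apply_left]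
  refine Finset.card_le_card_of_injOn (fun T => T.map σ.toEmbedding) ?_ ?_
  · intro T hT
    simp only [Finset.coe_filter, Finset.mem_powersetCard, Set.mem_setOf_eq] at hT ⊢
    refine ⟨⟨Finset.subset_univ _, by simpa using hT.1.2⟩, ?_, ?_⟩
    · exact Finset.mem_map.2 ⟨a, hT.2.1, h1⟩
    · exact Finset.mem_map.2 ⟨b, hT.2.2, h2⟩
  · intro T _ T' _ h
    exact Finset.map_injective _ h

theorem key {n k : ℕ} (hk : 2 ≤ k) (hkn : k < n)
    (φ : SimpleGraph (Fin n) → SimpleGraph (Fin n)) (hφ : IsLinearMap' φ)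
    (hI : ∀ G, HasI k (φ G) ↔ HasI k G) (i j : Fin n) (hij : i ≠ j)
    (a b c d : Fin n) (h1 : (φ (singleEdge i j)).Adj a b) (h2 : (φ (singleEdge i j)).Adj c d) :
    c = a ∨ c = b := by
  have hmono : ∀ G H, G ≤ H → φ G ≤ φ H := by
    intro G H h
    rw [← sup_eq_right.2 h, hφ]
    exact le_sup_left
  have hex : ∀ S : Finset (Fin n), ∃ T : Finset (Fin n), S.card = k →
      (∀ a ∈ T, ∀ b ∈ T, a ≠ b → ¬ (φ (MM S)).Adj a b) ∧ T.card = k := by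
    intro S
    by_cases hS : S.card = k
    · obtain ⟨T, hT⟩ := (hI (MM S)).2 ⟨S, fun a ha b hb _ h => h.2 ⟨ha, hb⟩, hS⟩
      exact ⟨T, fun _ => hT⟩
    · exact ⟨∅, fun h => absurd h hS⟩
  choose g hg using hex
  have hinj : ∀ S S', S.card = k → S'.card = k → g S = g S' → S = S' := by
    intro S S' hS hS' h
    have : HasI k (MM S ⊔ MM S') := by
      rw [← hI, hφ]
      refine ⟨g S, ?_, (hg S hS).2⟩
      intro a ha b hb hab hadj
      rcases hadj with hadj | hadj
      · exact (hg S hS).1 a ha b hb hab hadj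
      · exact (hg S' hS').1 a (h ▸ ha) b (h ▸ hb) hab hadj
    obtain ⟨U, hU, hc⟩ := this
    have e1 : U = S := Finset.eq_of_subset_of_card_le (subset_of_indep_MM hk
      (fun a ha b hb hab h => hU a ha b hb hab (Or.inl h)) hc) (by omega)
    have e2 : U = S' := Finset.eq_of_subset_of_card_le (subset_of_indep_MM hk
      (fun a ha b hb hab h => hU a ha b hb hab (Or.inr h)) hc) (by omega)
    exact e1.symm.trans e2
  have hsurj : ∀ T : Finset (Fin n), T.card = k → ∃ S, S.card = k ∧ g S = T := by
    have := Finset.surjOn_of_injOn_of_card_le (s := Finset.powersetCard k (Finset.univ : Finset (Fin n)))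
      (t := Finset.powersetCard k (Finset.univ : Finset (Fin n))) g
      (by
        intro S hS
        simp only [Finset.mem_coe, Finset.mem_powersetCard_univ] at hS ⊢
        exact (hg S hS).2)
      (by
        intro S hS S' hS' h
        simp only [Finset.mem_coe, Finset.mem_powersetCard_univ] at hS hS'
        exact hinj S S' hS hS' h) le_rfl
    intro T hT
    obtain ⟨S, hS, h⟩ := this (show T ∈ _ by simpa using hT)
    exact ⟨S, by simpa using hS, h⟩
  have hfwd : ∀ x y, (φ (singleEdge i j)).Adj x y → ∀ S : Finset (Fin n), S.card = k →
      x ∈ g S → y ∈ g S → i ∈ S ∧ j ∈ S := by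
    intro x y hxy S hS hx hy
    by_contra hcon
    refine (hg S hS).1 x hx y hy hxy.ne (hmono (singleEdge i j) _ ?_ hxy)
    intro u v huv
    simp only [singleEdge, SimpleGraph.fromEdgeSet_adj, Set.mem_singleton_iff, Sym2.eq_iff] at huv
    refine ⟨huv.2, ?_⟩
    rcases huv.1 with ⟨rfl, rfl⟩ | ⟨rfl, rfl⟩
    · exact hcon
    · exact fun h => hcon ⟨h.2, h.1⟩
  have hbwd : ∀ x y, (φ (singleEdge i j)).Adj x y → ∀ S : Finset (Fin n), S.card = k →
      i ∈ S → j ∈ S → x ∈ g S ∧ y ∈ g S := by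
    intro x y hxy S hS hi hj
    have heq := Finset.eq_of_subset_of_card_le
      (s := (Finset.powersetCard k (Finset.univ : Finset (Fin n))).filter
        (fun S => x ∈ g S ∧ y ∈ g S))
      (t := (Finset.powersetCard k (Finset.univ : Finset (Fin n))).filter
        (fun S => i ∈ S ∧ j ∈ S))
      (by
        intro S hS
        simp only [Finset.mem_filter, Finset.mem_powersetCard_univ] at hS ⊢
        exact ⟨hS.1, hfwd x y hxy S hS.1 hS.2.1 hS.2.2⟩)
      (by
        refine (card_pairs_le k hij hxy.ne).trans ?_
        refine Finset.card_le_card_of_surjOn g ?_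
        intro T hT
        simp only [Finset.mem_coe, Finset.mem_filter, Finset.mem_powersetCard_univ] at hT
        obtain ⟨S, hS, rfl⟩ := hsurj T hT.1
        exact ⟨S, by simpa [hS] using hT.2, rfl⟩)
    have hm : S ∈ (Finset.powersetCard k (Finset.univ : Finset (Fin n))).filter
        (fun S => i ∈ S ∧ j ∈ S) := by simp [hS, hi, hj]
    rw [← heq] at hm
    exact (Finset.mem_filter.1 hm).2
  by_contra hcon
  push Not at hcon
  obtain ⟨T, hT1, hT2, hT⟩ := Finset.exists_subsuperset_card_eq
    (s := {a, b}) (t := Finset.univ.erase c) (n := k)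
    (by
      intro x hx
      simp only [Finset.mem_insert, Finset.mem_singleton] at hx
      simp only [Finset.mem_erase, Finset.mem_univ, and_true]
      rintro rfl
      tauto)
    (Finset.card_le_two.trans hk)
    (by rw [Finset.card_erase_of_mem (Finset.mem_univ _)]; simp; omega)
  obtain ⟨S, hS, rfl⟩ := hsurj T hT
  obtain ⟨hi, hj⟩ := hfwd a b h1 S hS (hT1 (by simp)) (hT1 (by simp))
  have := hT2 (hbwd c d h2 S hS hi hj).1
  simp at this

theorem stmt7 (n t : ℕ) (ht : 1 ≤ t) (htn : t ≤ n - 1)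
    (φ : SimpleGraph (Fin n) → SimpleGraph (Fin n)) (hφ : IsCompleteLinearMap φ)
    (hpres : ∀ G : SimpleGraph (Fin n), indepNum (φ G) = t ↔ indepNum G = t) :
    ∀ i j : Fin n, i ≠ j →
      ∀ e ∈ (φ (singleEdge i j)).edgeSet, ∀ f ∈ (φ (singleEdge i j)).edgeSet,
        e ≠ f → ∃ v : Fin n, v ∈ e ∧ v ∈ f := by
  intro i j hij e he f hf hef
  obtain ⟨hlin, -⟩ := hφ
  have hmono : ∀ G H, G ≤ H → φ G ≤ φ H := by
    intro G H h
    rw [← sup_eq_right.2 h, hlin]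
    exact le_sup_left
  have p1 : ∀ G, HasI t G → HasI t (φ G) := by
    rintro G ⟨S, hS, hc⟩
    have h := (hpres (MM S)).2 (by rw [indepNum_MM (by omega), hc])
    refine ((indepNum_eq_iff _).1 h).1.anti (hmono _ _ ?_)
    intro u v huv
    exact ⟨huv.ne, fun h => hS u h.1 v h.2 huv.ne huv⟩
  have p2 : ∀ G, HasI (t + 1) G → HasI (t + 1) (φ G) := by
    intro G hG
    by_contra h
    have := (hpres G).1 ((indepNum_eq_iff _).2 ⟨p1 G (hG.mono_card (by omega)), h⟩)
    exact ((indepNum_eq_iff _).1 this).2 hG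
  have p3 : ∀ G, HasI (t + 1) (φ G) → HasI (t + 1) G := by
    intro G hG
    by_contra h
    obtain ⟨H, hH, hHt⟩ := exists_sub (by omega) G h
    exact ((indepNum_eq_iff _).1 ((hpres H).2 hHt)).2 (hG.anti (hmono _ _ hH))
  have p4 : ∀ G, HasI t (φ G) → HasI t G := by
    intro G hG
    by_contra h
    have := (hpres G).1 ((indepNum_eq_iff _).2
      ⟨hG, fun h' => h ((p3 G h').mono_card (by omega))⟩)
    exact h ((indepNum_eq_iff _).1 this).1
  induction e using Sym2.ind with
  | _ a b =>
  induction f using Sym2.ind with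
  | _ c d =>
  rw [SimpleGraph.mem_edgeSet] at he hf
  have hres : c = a ∨ c = b := by
    by_cases h : t + 1 < n
    · exact key (k := t + 1) (by omega) h φ hlin (fun G => ⟨p3 G, p2 G⟩) i j hij a b c d he hf
    · by_cases h2 : 2 ≤ t
      · exact key (k := t) h2 (by omega) φ hlin (fun G => ⟨p4 G, p1 G⟩) i j hij a b c d he hf
      · have hab := he.ne
        have : n = 2 := by omega
        subst this
        omega
  rcases hres with h | h
  · exact ⟨c, by simp [h], by simp⟩
  · exact ⟨c, by simp [h], by simp⟩
end

section
/- Let n, t be integers with 1 ≤ t ≤ n−1. Suppose φ: 𝒢_n → 𝒢_n is a complete linear map satisfying: for all G ∈ 𝒢_n, α(φ(G)) = t if and only if α(G) = t. Then for all distinct i,j ∈ {1,...,n}, the graph φ(G_{ij}) has exactly one edge. -/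
namespace Stmt8Aux

/-- `s` is independent in `G`. -/
def Ind {V : Type*} (G : SimpleGraph V) (s : Finset V) : Prop :=
  ∀ a ∈ s, ∀ b ∈ s, a ≠ b → ¬ G.Adj a b

/-- `G` has an independent set of size `k`. -/
def HI {V : Type*} (G : SimpleGraph V) (k : ℕ) : Prop :=
  ∃ s : Finset V, Ind G s ∧ s.card = k

/-- The complement of the complete graph on `S`. -/
def CC {V : Type*} (S : Finset V) : SimpleGraph V where
  Adj a b := a ≠ b ∧ ¬ (a ∈ S ∧ b ∈ S)
  symm := ⟨fun a b h => ⟨h.1.symm, fun h' => h.2 ⟨h'.2, h'.1⟩⟩⟩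
  loopless := ⟨fun _ h => h.1 rfl⟩

theorem Ind.anti {V : Type*} {G H : SimpleGraph V} {s : Finset V} (hGH : G ≤ H)
    (h : Ind H s) : Ind G s := fun a ha b hb hab h' => h a ha b hb hab (hGH h')

theorem Ind.sup {V : Type*} {G H : SimpleGraph V} {s : Finset V} (h : Ind G s)
    (h' : Ind H s) : Ind (G ⊔ H) s := by
  intro a ha b hb hab hadj
  rcases hadj with h1 | h1
  · exact h a ha b hb hab h1
  · exact h' a ha b hb hab h1

theorem le_indepNum {n : ℕ} (G : SimpleGraph (Fin n)) (k : ℕ) :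
    k ≤ indepNum G ↔ HI G k := by
  have hbdd : BddAbove {k | ∃ s : Finset (Fin n),
      (∀ a ∈ s, ∀ b ∈ s, a ≠ b → ¬ G.Adj a b) ∧ s.card = k} := by
    refine ⟨n, ?_⟩
    rintro k ⟨s, -, rfl⟩
    simpa using s.card_le_univ
  constructor
  · intro h
    have hne : {k | ∃ s : Finset (Fin n),
      (∀ a ∈ s, ∀ b ∈ s, a ≠ b → ¬ G.Adj a b) ∧ s.card = k}.Nonempty :=
      ⟨0, ∅, by simp, rfl⟩
    obtain ⟨s, hs, hc⟩ := Nat.sSup_mem hne hbdd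
    have hk : k ≤ s.card := by rw [hc]; exact h
    obtain ⟨u, hu, huc⟩ := Finset.exists_subset_card_eq hk
    exact ⟨u, fun a ha b hb => hs a (hu ha) b (hu hb), huc⟩
  · rintro ⟨s, hs, hc⟩
    exact le_csSup hbdd ⟨s, hs, hc⟩

theorem indepNum_anti {n : ℕ} {G H : SimpleGraph (Fin n)} (h : G ≤ H) :
    indepNum H ≤ indepNum G := by
  obtain ⟨s, hs, hc⟩ := (le_indepNum H _).1 le_rfl
  exact (le_indepNum G _).2 ⟨s, hs.anti h, hc⟩

theorem ind_CC {V : Type*} (S : Finset V) : Ind (CC S) S :=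
  fun _ ha _ hb _ h => h.2 ⟨ha, hb⟩

theorem sub_of_ind_CC {V : Type*} {S U : Finset V} (h : Ind (CC S) U) (hU : 2 ≤ U.card) :
    U ⊆ S := by
  intro a ha
  obtain ⟨b, hb, hab⟩ := Finset.exists_mem_ne hU a
  by_contra hS
  exact h a ha b hb hab.symm ⟨hab.symm, fun h' => hS h'.1⟩

theorem eq_of_ind_CC {V : Type*} {S U : Finset V} (h : Ind (CC S) U) (hU : 2 ≤ U.card)
    (hc : S.card ≤ U.card) : U = S :=
  Finset.eq_of_subset_of_card_le (sub_of_ind_CC h hU) hc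

theorem singleEdge_adj {V : Type*} {i j a b : V} :
    (singleEdge i j).Adj a b ↔ s(a, b) = s(i, j) ∧ a ≠ b := by
  simp [singleEdge]

theorem mono {V : Type*} {φ : SimpleGraph V → SimpleGraph V} (hφ : IsLinearMap' φ)
    {G H : SimpleGraph V} (h : G ≤ H) : φ G ≤ φ H := by
  have := hφ G H
  rw [sup_eq_right.2 h] at this
  rw [this]; exact le_sup_left

theorem core (n k : ℕ) (hk : 2 ≤ k) (hkn : k < n)
    (φ : SimpleGraph (Fin n) → SimpleGraph (Fin n)) (hφ : IsLinearMap' φ)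
    (hP : ∀ G, HI (φ G) k ↔ HI G k) (i j : Fin n) (hij : i ≠ j) :
    ((φ (singleEdge i j)).edgeSet).ncard = 1 := by
  classical
  have h1 : ∀ S : Finset (Fin n), ∃ T : Finset (Fin n), S.card = k →
      Ind (φ (CC S)) T ∧ T.card = k := by
    intro S
    by_cases hS : S.card = k
    · obtain ⟨T, hT⟩ := (hP (CC S)).2 ⟨S, ind_CC S, hS⟩
      exact ⟨T, fun _ => hT⟩
    · exact ⟨∅, fun h => absurd h hS⟩
  choose T hT using h1
  have hinj : ∀ S S', S.card = k → S'.card = k → T S = T S' → S = S' := by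
    intro S S' hS hS' he
    have a1 := (hT S hS).1
    have a2 := (hT S' hS').1
    rw [← he] at a2
    have a3 := a1.sup a2
    rw [← hφ] at a3
    obtain ⟨U, hU, hUc⟩ := (hP _).1 ⟨_, a3, (hT S hS).2⟩
    rw [← eq_of_ind_CC (hU.anti le_sup_left) (by omega) (by omega),
      ← eq_of_ind_CC (hU.anti le_sup_right) (by omega) (by omega)]
  have hhit : ∀ S, S.card = k → i ∈ S → j ∈ S → ¬ Ind (φ (singleEdge i j)) (T S) := by
    intro S hS hi hj h
    have a3 := (hT S hS).1.sup h
    rw [← hφ] at a3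
    obtain ⟨U, hU, hUc⟩ := (hP _).1 ⟨_, a3, (hT S hS).2⟩
    have := eq_of_ind_CC (hU.anti le_sup_left) (by omega) (by omega)
    subst this
    exact hU i hi j hj hij (Or.inr (singleEdge_adj.2 ⟨rfl, hij⟩))
  have hmiss : ∀ S, S.card = k → ¬ (i ∈ S ∧ j ∈ S) → Ind (φ (singleEdge i j)) (T S) := by
    intro S hS hn
    refine (hT S hS).1.anti (mono hφ ?_)
    intro a b hab
    rw [singleEdge_adj] at hab
    obtain ⟨h1, h2⟩ := hab
    refine ⟨h2, ?_⟩
    rcases Sym2.eq_iff.1 h1 with ⟨rfl, rfl⟩ | ⟨rfl, rfl⟩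
    · exact hn
    · exact fun h => hn ⟨h.2, h.1⟩
  have hsurj : ∀ U : Finset (Fin n), U.card = k → ∃ S, S.card = k ∧ T S = U := by
    intro U hU
    let f : {S : Finset (Fin n) // S.card = k} → {S : Finset (Fin n) // S.card = k} :=
      fun S => ⟨T S.1, (hT S.1 S.2).2⟩
    have hf : Function.Injective f := by
      intro S S' h
      exact Subtype.ext (hinj _ _ S.2 S'.2 (congrArg Subtype.val h))
    obtain ⟨S, hS⟩ := Finite.surjective_of_injective hf ⟨U, hU⟩
    exact ⟨S.1, S.2, congrArg Subtype.val hS⟩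
  let B : Fin n → Fin n → Finset (Finset (Fin n)) := fun a b =>
    Finset.univ.filter (fun S => S.card = k ∧ a ∈ S ∧ b ∈ S)
  have hcard : ∀ a b : Fin n, a ≠ b → (B i j).card ≤ (B a b).card := by
    intro a b hab
    let σ : Equiv.Perm (Fin n) := (Equiv.swap i a).trans (Equiv.swap (Equiv.swap i a j) b)
    have hσj : σ j = b := by simp [σ]
    have hσi : σ i = a := by
      simp only [σ, Equiv.trans_apply, Equiv.swap_apply_left]
      apply Equiv.swap_apply_of_ne_of_ne _ hab
      intro h
      have : Equiv.swap i a i = Equiv.swap i a j := by rw [Equiv.swap_apply_left]; exact h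
      exact hij ((Equiv.swap i a).injective this)
    refine Finset.card_le_card_of_injOn (fun S => S.map σ.toEmbedding) ?_ ?_
    · intro S hS
      simp only [B, Finset.coe_filter, Finset.mem_univ, true_and, Set.mem_ofPred_eq] at hS ⊢
      refine ⟨by simpa using hS.1, ?_, ?_⟩
      · rw [← hσi]; exact Finset.mem_map_of_mem σ.toEmbedding hS.2.1
      · rw [← hσj]; exact Finset.mem_map_of_mem σ.toEmbedding hS.2.2
    · intro S _ S' _ h
      exact Finset.map_injective _ h
  have hB : ∀ a b : Fin n, (φ (singleEdge i j)).Adj a b → B a b = (B i j).image T := by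
    intro a b hab
    apply Finset.eq_of_subset_of_card_le
    · intro U hU
      simp only [B, Finset.mem_filter, Finset.mem_univ, true_and] at hU
      obtain ⟨S, hS, rfl⟩ := hsurj U hU.1
      refine Finset.mem_image_of_mem _ ?_
      simp only [B, Finset.mem_filter, Finset.mem_univ, true_and]
      refine ⟨hS, ?_⟩
      by_contra hn
      exact hmiss S hS hn a hU.2.1 b hU.2.2 hab.ne hab
    · exact Finset.card_image_le.trans (hcard a b hab.ne)
  have hext : ∀ a b c : Fin n, c ≠ a → c ≠ b → a ≠ b → ∃ U ∈ B a b, c ∉ U := by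
    intro a b c ha hb hab
    obtain ⟨U, h1, h2, h3⟩ := Finset.exists_subsuperset_card_eq
      (s := {a, b}) (t := Finset.univ.erase c) (n := k)
      (by intro x hx; simp only [Finset.mem_insert, Finset.mem_singleton] at hx
          rcases hx with rfl | rfl <;> simp [ha.symm, hb.symm])
      (by rw [Finset.card_pair hab]; exact hk)
      (by rw [Finset.card_erase_of_mem (Finset.mem_univ _)]; simp; omega)
    refine ⟨U, ?_, fun h => by simpa using h2 h⟩
    simp only [B, Finset.mem_filter, Finset.mem_univ, true_and]
    exact ⟨h3, h1 (by simp), h1 (by simp)⟩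
  obtain ⟨S, hS1, -, hS3⟩ := Finset.exists_subsuperset_card_eq
      (s := {i, j}) (t := Finset.univ) (n := k) (Finset.subset_univ _)
      (by rw [Finset.card_pair hij]; exact hk) (by simp; omega)
  have := hhit S hS3 (hS1 (by simp)) (hS1 (by simp))
  simp only [Ind, not_forall, not_not] at this
  obtain ⟨a, -, b, -, hab, hadj⟩ := this
  rw [Set.ncard_eq_one]
  refine ⟨s(a, b), ?_⟩
  ext e
  induction e using Sym2.ind with
  | _ c d =>
  simp only [SimpleGraph.mem_edgeSet, Set.mem_singleton_iff]
  constructor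
  · intro hcd
    have hBB : B a b = B c d := (hB a b hadj).trans (hB c d hcd).symm
    have hc : c = a ∨ c = b := by
      by_contra! h
      obtain ⟨U, hU, hcU⟩ := hext a b c h.1 h.2 hab
      rw [hBB] at hU
      simp only [B, Finset.mem_filter] at hU
      exact hcU hU.2.2.1
    have hd : d = a ∨ d = b := by
      by_contra! h
      obtain ⟨U, hU, hcU⟩ := hext a b d h.1 h.2 hab
      rw [hBB] at hU
      simp only [B, Finset.mem_filter] at hU
      exact hcU hU.2.2.2
    have hne := hcd.ne
    rw [Sym2.eq_iff]
    rcases hc with rfl | rfl <;> rcases hd with rfl | rfl <;> simp_all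
  · intro h
    rcases Sym2.eq_iff.1 h with ⟨rfl, rfl⟩ | ⟨rfl, rfl⟩
    · exact hadj
    · exact hadj.symm

theorem indepNum_CC {n : ℕ} (S : Finset (Fin n)) (hS : 1 ≤ S.card) :
    indepNum (CC S) = S.card := by
  apply le_antisymm
  · obtain ⟨U, hU, hUc⟩ := (le_indepNum (CC S) _).1 le_rfl
    rw [← hUc]
    by_cases h : 2 ≤ U.card
    · exact Finset.card_le_card (sub_of_ind_CC hU h)
    · omega
  · exact (le_indepNum _ _).2 ⟨S, ind_CC S, rfl⟩

theorem exists_sub {n t : ℕ} (htn : t < n) (G : SimpleGraph (Fin n)) (hG : indepNum G ≤ t) :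
    ∃ H ≤ G, indepNum H = t := by
  obtain ⟨H, hHG, hH⟩ := (Set.toFinite {H : SimpleGraph (Fin n) | indepNum H ≤ t}).exists_le_minimal
    (show G ∈ {H : SimpleGraph (Fin n) | indepNum H ≤ t} from hG)
  refine ⟨H, hHG, ?_⟩
  by_contra hne
  have hlt : indepNum H < t := lt_of_le_of_ne hH.1 hne
  have hex : ∃ a b, H.Adj a b := by
    by_contra! h
    have : n ≤ indepNum H := (le_indepNum _ _).2
      ⟨Finset.univ, fun a _ b _ _ => h a b, by simp⟩
    omega
  obtain ⟨a, b, hab⟩ := hex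
  let H' := H.deleteEdges {s(a, b)}
  have hle : H' ≤ H := SimpleGraph.deleteEdges_le _
  have hH' : indepNum H' ≤ t := by
    obtain ⟨U, hU, hUc⟩ := (le_indepNum H' _).1 le_rfl
    have h2 : (U.erase a).card ≤ indepNum H := by
      refine (le_indepNum _ _).2 ⟨U.erase a, ?_, rfl⟩
      intro c hc d hd hcd hadj
      rw [Finset.mem_erase] at hc hd
      refine hU c hc.2 d hd.2 hcd ?_
      simp only [H', SimpleGraph.deleteEdges_adj, Set.mem_singleton_iff]
      refine ⟨hadj, fun h => ?_⟩
      rcases Sym2.eq_iff.1 h with ⟨h1, _⟩ | ⟨_, h1⟩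
      · exact hc.1 h1
      · exact hd.1 h1
    have := Finset.pred_card_le_card_erase (s := U) (a := a)
    omega
  have := hH.2 hH' hle hab
  simp [H', SimpleGraph.deleteEdges_adj] at this

end Stmt8Aux

open Stmt8Aux in
theorem stmt8 (n t : ℕ) (ht : 1 ≤ t) (htn : t ≤ n - 1)
    (φ : SimpleGraph (Fin n) → SimpleGraph (Fin n)) (hφ : IsCompleteLinearMap φ)
    (hpres : ∀ G : SimpleGraph (Fin n), indepNum (φ G) = t ↔ indepNum G = t) :
    ∀ i j : Fin n, i ≠ j → ((φ (singleEdge i j)).edgeSet).ncard = 1 := by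
  intro i j hij
  by_cases hn : n = 2
  · subst hn
    have hall : ∀ a b : Fin 2, a ≠ b → s(a, b) = s(i, j) := by
      revert i j; decide
    have h1 : singleEdge i j = ⊤ := by
      ext a b
      rw [singleEdge_adj, SimpleGraph.top_adj]
      exact ⟨fun h => h.2, fun h => ⟨hall a b h, h⟩⟩
    rw [h1, hφ.2, Set.ncard_eq_one]
    refine ⟨s(i, j), ?_⟩
    ext e
    induction e using Sym2.ind with
    | _ a b =>
    rw [SimpleGraph.mem_edgeSet, SimpleGraph.top_adj, Set.mem_singleton_iff]
    refine ⟨hall a b, fun h => ?_⟩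
    rcases Sym2.eq_iff.1 h with ⟨rfl, rfl⟩ | ⟨rfl, rfl⟩
    · exact hij
    · exact hij.symm
  by_cases ht1 : t = 1
  · subst ht1
    refine core n 2 le_rfl (by omega) φ hφ.1 ?_ i j hij
    intro G
    rw [← le_indepNum, ← le_indepNum]
    have hpos : ∀ G : SimpleGraph (Fin n), 1 ≤ indepNum G := fun G =>
      (le_indepNum G 1).2 ⟨{i}, by intro a ha b hb hab; simp_all, by simp⟩
    have := hpos G
    have := hpos (φ G)
    have := hpres G
    omega
  · refine core n t (by omega) (by omega) φ hφ.1 ?_ i j hij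
    intro G
    rw [← le_indepNum, ← le_indepNum]
    constructor
    · intro h
      by_contra! hlt
      obtain ⟨H, hHG, hH⟩ := exists_sub (t := t) (by omega) G hlt.le
      have h1 := (hpres H).2 hH
      have h2 := indepNum_anti (mono hφ.1 hHG)
      have h3 := (hpres G).1 (by omega)
      omega
    · intro h
      obtain ⟨S, hS, hSc⟩ := (le_indepNum G t).1 h
      have h1 := (hpres (CC S)).2 (by rw [indepNum_CC S (by omega), hSc])
      have h2 : G ≤ CC S := fun a b hab =>
        ⟨hab.ne, fun h' => hS a h'.1 b h'.2 hab.ne hab⟩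
      have h3 := indepNum_anti (mono hφ.1 h2)
      omega
end
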